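/- arXiv:1406.3327 — 3 statements merged into one kernel-verified Lean document; each statement's English description precedes it below -/
import Mathlib

section
/- For any ε > 0, there exists n_0 ∈ ℕ such that for any setting with #M = #N = n ≥ n_0 and q_j = 1 for all j ∈ M, the fraction of type profiles t ∈ T^n at which the allocation RSD(t) is first-choice-maximizing is smaller than ε. -/
/-! RSD is first-choice-maximizing only if no object that is somebody's first choice is ever handed
to an agent who ranks another object first. The maximal `d1` at a profile is the number `F` of
distinct first choices. If distinct agents `a, a'` share their first choice, and the second choice
of `a'` is the first choice of some agent `b`, then serial dictatorship with `a, a'` processed first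
gives `a'` its second choice; since the columns of RSD sum to at most one, this loses a positive
amount and `d1` of RSD is strictly below `F` (`not_fcm`).

It remains to see that such a triple exists at almost all profiles. Let `S` be the set of first
choices of the first `h = n / 2` agents. By a union bound over the sets of size `n / 64`, the
probability that `|S| ≤ n / 64` is at most `2 ^ n * (1 / 64) ^ h ≤ 2 * (1 / 16) ^ h`
(`card_few_first`). Conditionally on the preferences of the first `h` agents with `|S| > n / 64`,
each remaining agent independently has both its first and its second choice in `S` with probability
at least `1 / 8192`, and any such agent completes a triple; so RSD is first-choice-maximizing with
probability at most `(1 - 1 / 8192) ^ h` (`card_fcm_many`). Both bounds tend to zero. -/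

open Finset

/-- A preference type (strict ranking of the `m` objects): `t k` is the object
ranked `k`-th (0-indexed).  Object `a` is preferred to `b` iff
`t.symm a < t.symm b`. -/
abbrev Pref (m : ℕ) := Fin m ≃ Fin m

/-- One round of a Boston-style mechanism: the agents in `order` (highest priority
first) that are not yet assigned apply to `choice i`; an applicant receives a copy
iff the remaining capacity of its chosen object is still positive. -/
def applyRound {n m : ℕ} (choice : Fin n → Option (Fin m)) (order : List (Fin n))
    (st : (Fin n → Option (Fin m)) × (Fin m → ℕ)) :
    (Fin n → Option (Fin m)) × (Fin m → ℕ) :=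
  order.foldl
    (fun s i =>
      match s.1 i with
      | some _ => s
      | none =>
        match choice i with
        | none => s
        | some j =>
          if 0 < s.2 j then
            (Function.update s.1 i (some j), Function.update s.2 j (s.2 j - 1))
          else s)
    st

/-- The list of agents in order of priority under `π` (the agent with `π i = 0` first). -/
def priorityList {n : ℕ} (π : Equiv.Perm (Fin n)) : List (Fin n) :=
  (List.finRange n).map π.symm

/-- The most preferred object (under `ti`) among the objects with positive
remaining capacity, if any such object exists. -/
def favorite {m : ℕ} (ti : Pref m) (cap : Fin m → ℕ) : Option (Fin m) :=
  ((List.finRange m).find? (fun k => decide (0 < cap (ti k)))).map ti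

/-- The naïve Boston mechanism for a fixed priority ordering `π`: in round `k`
every not-yet-assigned agent applies to its `k`-th ranked object. -/
def NBMassign {n m : ℕ} (q : Fin m → ℕ) (t : Fin n → Pref m) (π : Equiv.Perm (Fin n)) :
    Fin n → Option (Fin m) :=
  ((List.finRange m).foldl
    (fun st k => applyRound (fun i => some (t i k)) (priorityList π) st)
    ((fun _ => none), q)).1

/-- The adaptive Boston mechanism for a fixed priority ordering `π`: in every round
each not-yet-assigned agent applies to its most preferred object among the objects
with strictly positive remaining capacity (at the beginning of the round). -/
def ABMassign {n m : ℕ} (q : Fin m → ℕ) (t : Fin n → Pref m) (π : Equiv.Perm (Fin n)) :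
    Fin n → Option (Fin m) :=
  ((fun st => applyRound (fun i => favorite (t i) st.2) (priorityList π) st)^[n]
    ((fun _ => none), q)).1

/-- The serial dictatorship for a fixed priority ordering `π`: agents are processed
in order of priority, each receiving one copy of its most preferred object among
those with remaining capacity. -/
def SDassign {n m : ℕ} (q : Fin m → ℕ) (t : Fin n → Pref m) (π : Equiv.Perm (Fin n)) :
    Fin n → Option (Fin m) :=
  ((priorityList π).foldl
    (fun s i =>
      match favorite (t i) s.2 with
      | none => s
      | some j => (Function.update s.1 i (some j), Function.update s.2 j (s.2 j - 1)))
    ((fun _ => none), q)).1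

/-- The (deterministic) allocation matrix induced by an assignment of objects to agents. -/
def detAlloc {n m : ℕ} (a : Fin n → Option (Fin m)) : Fin n → Fin m → ℝ :=
  fun i j => if a i = some j then 1 else 0

/-- The naïve Boston mechanism: the average of `NBMassign` over all `n!` priority orderings. -/
noncomputable def NBM {n m : ℕ} (q : Fin m → ℕ) (t : Fin n → Pref m) : Fin n → Fin m → ℝ :=
  fun i j => (∑ π : Equiv.Perm (Fin n), detAlloc (NBMassign q t π) i j) / (Nat.factorial n)

/-- The adaptive Boston mechanism: the average of `ABMassign` over all `n!` priority orderings. -/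
noncomputable def ABM {n m : ℕ} (q : Fin m → ℕ) (t : Fin n → Pref m) : Fin n → Fin m → ℝ :=
  fun i j => (∑ π : Equiv.Perm (Fin n), detAlloc (ABMassign q t π) i j) / (Nat.factorial n)

/-- Random serial dictatorship: the average of `SDassign` over all `n!` priority orderings. -/
noncomputable def RSD {n m : ℕ} (q : Fin m → ℕ) (t : Fin n → Pref m) : Fin n → Fin m → ℝ :=
  fun i j => (∑ π : Equiv.Perm (Fin n), detAlloc (SDassign q t π) i j) / (Nat.factorial n)

/-- `x` is an allocation for capacities `q`. -/
def IsAlloc {n m : ℕ} (q : Fin m → ℕ) (x : Fin n → Fin m → ℝ) : Prop :=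
  (∀ i j, 0 ≤ x i j ∧ x i j ≤ 1) ∧ (∀ i, ∑ j, x i j = 1) ∧ ∀ j, ∑ i, x i j ≤ q j

/-- First-order stochastic dominance of `v` over `w` with respect to the ranking `ti`. -/
def FOSD {m : ℕ} (ti : Pref m) (v w : Fin m → ℝ) : Prop :=
  ∀ K : Fin m, ∑ k ∈ Finset.Iic K, w (ti k) ≤ ∑ k ∈ Finset.Iic K, v (ti k)

/-- Strict first-order stochastic dominance. -/
def StrictFOSD {m : ℕ} (ti : Pref m) (v w : Fin m → ℝ) : Prop :=
  FOSD ti v w ∧ ∃ K : Fin m, ∑ k ∈ Finset.Iic K, w (ti k) < ∑ k ∈ Finset.Iic K, v (ti k)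

/-- `x` ordinally dominates `y` at type profile `t`. -/
def OrdDom {n m : ℕ} (t : Fin n → Pref m) (x y : Fin n → Fin m → ℝ) : Prop :=
  ∀ i, FOSD (t i) (x i) (y i)

/-- `x` strictly ordinally dominates `y` at type profile `t`. -/
def StrictOrdDom {n m : ℕ} (t : Fin n → Pref m) (x y : Fin n → Fin m → ℝ) : Prop :=
  OrdDom t x y ∧ ∃ i : Fin n, ∃ K : Fin m,
    ∑ k ∈ Finset.Iic K, y i (t i k) < ∑ k ∈ Finset.Iic K, x i (t i k)

/-- The rank distribution of allocation `x` at profile `t`: `rankDist t x k` is the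
expected number of `k`-th (0-indexed) choices allocated. -/
noncomputable def rankDist {n m : ℕ} (t : Fin n → Pref m) (x : Fin n → Fin m → ℝ)
    (k : Fin m) : ℝ :=
  ∑ i, x i (t i k)

/-- `x` weakly rank dominates `y` at profile `t`. -/
def WeakRankDom {n m : ℕ} (t : Fin n → Pref m) (x y : Fin n → Fin m → ℝ) : Prop :=
  ∀ K : Fin m, ∑ k ∈ Finset.Iic K, rankDist t y k ≤ ∑ k ∈ Finset.Iic K, rankDist t x k

/-- `x` strictly rank dominates `y` at profile `t`. -/
def StrictRankDom {n m : ℕ} (t : Fin n → Pref m) (x y : Fin n → Fin m → ℝ) : Prop :=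
  WeakRankDom t x y ∧ ∃ K : Fin m,
    ∑ k ∈ Finset.Iic K, rankDist t y k < ∑ k ∈ Finset.Iic K, rankDist t x k

/-- Feasibility of a deterministic (total) assignment. -/
def Feasible {n m : ℕ} (q : Fin m → ℕ) (y : Fin n → Fin m) : Prop :=
  ∀ j, (Finset.univ.filter fun i => y i = j).card ≤ q j

/-- Ex-post efficiency at `t` of a deterministic assignment `a`: no feasible
deterministic assignment makes every agent weakly better off and some agent
strictly better off. -/
def ExPostEfficientAt {n m : ℕ} (q : Fin m → ℕ) (t : Fin n → Pref m)
    (a : Fin n → Option (Fin m)) : Prop :=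
  ¬ ∃ y : Fin n → Fin m, Feasible q y ∧
      (∀ i j, a i = some j → (t i).symm (y i) ≤ (t i).symm j) ∧
      ∃ i j, a i = some j ∧ (t i).symm (y i) < (t i).symm j

/-- The expected number of allocated first choices under `x` at profile `t`. -/
noncomputable def d1 {n m : ℕ} (t : Fin n → Pref m) (x : Fin n → Fin m → ℝ) : ℝ :=
  ∑ i, ∑ j, if ((t i).symm j : ℕ) = 0 then x i j else 0

/-- `x` is first-choice-maximizing at profile `t`. -/
def FirstChoiceMax {n m : ℕ} (q : Fin m → ℕ) (t : Fin n → Pref m)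
    (x : Fin n → Fin m → ℝ) : Prop :=
  IsAlloc q x ∧ ∀ y : Fin n → Fin m → ℝ, IsAlloc q y → d1 t y ≤ d1 t x

/-- `u` is a vNM utility function consistent with the ranking `ti`. -/
def Consistent {m : ℕ} (ti : Pref m) (u : Fin m → ℝ) : Prop :=
  ∀ a b : Fin m, ti.symm a < ti.symm b → u b < u a

/-- Uniformly relatively bounded indifference with bound `r`. -/
def URBI {m : ℕ} (r : ℝ) (u : Fin m → ℝ) : Prop :=
  ∀ a b : Fin m, u b < u a → u b - (⨅ j, u j) ≤ r * (u a - (⨅ j, u j))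

/-! ### Counting permutations -/

/-- Permutations act transitively on ordered pairs of distinct points. -/
lemma exists_perm_pair {β : Type*} [DecidableEq β] (a b a' b' : β) (h : a ≠ b) (h' : a' ≠ b') :
    ∃ σ : Equiv.Perm β, σ a = a' ∧ σ b = b' := by
  refine ⟨Equiv.swap (Equiv.swap a a' b) b' * Equiv.swap a a', ?_, ?_⟩
  · rw [Equiv.Perm.mul_apply, Equiv.swap_apply_left]
    apply Equiv.swap_apply_of_ne_of_ne _ h'
    intro hh
    apply h
    apply (Equiv.swap a a').injective
    rw [← hh, Equiv.swap_apply_left]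
  · rw [Equiv.Perm.mul_apply, Equiv.swap_apply_left]

/-- A uniformly random permutation maps `z` into `T` with probability `|T| / |β|`, here with the
denominators cleared: translation by a transposition shows that all images of `z` are equally
likely. -/
lemma card_perm_mem {β : Type*} [Fintype β] [DecidableEq β] (z : β) (T : Finset β) :
    (univ.filter fun p : Equiv.Perm β => p z ∈ T).card * Fintype.card β
      = T.card * Fintype.card (Equiv.Perm β) := by
  have key : ∀ T : Finset β, (univ.filter fun p : Equiv.Perm β => p z ∈ T).card
      = T.card * (univ.filter fun p : Equiv.Perm β => p z = z).card := by
    intro T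
    rw [Finset.card_eq_sum_card_fiberwise (t := T) (f := fun p : Equiv.Perm β => p z)
      (fun p hp => by simpa using hp)]
    rw [← smul_eq_mul, ← Finset.sum_const]
    refine Finset.sum_congr rfl fun x hx => ?_
    apply Finset.card_bij' (fun p _ => Equiv.swap x z * p) (fun p _ => Equiv.swap x z * p)
    · intro p hp; simp at hp; simp [hp.2]
    · intro p hp; simp at hp; simp [hp, hx]
    · intro p hp; simp [← mul_assoc]
    · intro p hp; simp [← mul_assoc]
  have hu := key univ
  simp only [mem_univ, filter_true, card_univ] at hu
  rw [key T, hu]; ring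

/-- A uniformly random permutation maps both of `z ≠ o` into `T` with probability
`|T| (|T| - 1) / (|β| (|β| - 1))`, here with the denominators cleared. -/
lemma card_perm_pair_mem {β : Type*} [Fintype β] [DecidableEq β] (z o : β) (hzo : z ≠ o)
    (T : Finset β) :
    (univ.filter fun p : Equiv.Perm β => p z ∈ T ∧ p o ∈ T).card * (univ : Finset β).offDiag.card
      = T.offDiag.card * Fintype.card (Equiv.Perm β) := by
  have key : ∀ T : Finset β, (univ.filter fun p : Equiv.Perm β => p z ∈ T ∧ p o ∈ T).card
      = T.offDiag.card * (univ.filter fun p : Equiv.Perm β => p z = z ∧ p o = o).card := by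
    intro T
    rw [Finset.card_eq_sum_card_fiberwise (t := T.offDiag)
      (f := fun p : Equiv.Perm β => (p z, p o))
      (fun p hp => by simpa [hzo] using hp)]
    rw [← smul_eq_mul, ← Finset.sum_const]
    refine Finset.sum_congr rfl fun x hx => ?_
    rw [Finset.mem_offDiag] at hx
    obtain ⟨σ, h1, h2⟩ := exists_perm_pair z o x.1 x.2 hzo hx.2.2
    apply Finset.card_bij' (fun p _ => σ⁻¹ * p) (fun p _ => σ * p)
    · intro p hp
      simp only [mem_filter, mem_univ, true_and, Prod.ext_iff] at hp
      simp [hp.2.1, hp.2.2, ← h1, ← h2]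
    · intro p hp
      simp only [mem_filter, mem_univ, true_and] at hp
      simp [hp.1, hp.2, h1, h2, hx.1, hx.2.1]
    · intro p hp; simp
    · intro p hp; simp
  have hu := key univ
  simp only [mem_univ, and_self, filter_true, card_univ] at hu
  rw [key T, hu]; ring

/-! ### Profiles at which RSD is not first-choice-maximizing -/

lemma d1_eq {k : ℕ} (t : Fin (k+2) → Pref (k+2)) (x : Fin (k+2) → Fin (k+2) → ℝ) :
    d1 t x = ∑ i, x i (t i 0) := by
  unfold d1
  refine Finset.sum_congr rfl fun i _ => ?_
  rw [Finset.sum_eq_single (t i 0)]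
  · simp
  · intro j _ hj
    rw [if_neg]
    intro h
    apply hj
    have : (t i).symm j = 0 := Fin.ext h
    rw [← this]; simp
  · simp

/-- An agent's assignment is unchanged while only other agents are processed. -/
lemma sd_foldl_preserve {n m : ℕ} (t : Fin n → Pref m) (a : Fin n) (l : List (Fin n))
    (ha : a ∉ l) (s : (Fin n → Option (Fin m)) × (Fin m → ℕ)) :
    (l.foldl
      (fun s i =>
        match favorite (t i) s.2 with
        | none => s
        | some j => (Function.update s.1 i (some j), Function.update s.2 j (s.2 j - 1)))
      s).1 a = s.1 a := by
  induction l generalizing s with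
  | nil => rfl
  | cons b l ih =>
    simp only [List.mem_cons, not_or] at ha
    rw [List.foldl_cons, ih ha.2]
    split
    · rfl
    · simp [Function.update_of_ne ha.1]

/-- If `a` and `a'` share their first choice, processing them first, in this order, assigns to
`a'` its second choice. -/
lemma exists_sd_second {k : ℕ} (t : Fin (k+2) → Pref (k+2)) (a a' : Fin (k+2)) (haa : a ≠ a')
    (h0 : t a 0 = t a' 0) :
    ∃ π : Equiv.Perm (Fin (k+2)), SDassign (fun _ => 1) t π a' = some (t a' 1) := by
  obtain ⟨σ, hσ0, hσ1⟩ := exists_perm_pair (0 : Fin (k+2)) 1 a a' (by simp) haa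
  refine ⟨σ.symm, ?_⟩
  have hfav0 : favorite (t a) (fun _ => 1) = some (t a 0) := by
    simp [favorite, List.finRange_succ]
  have hne : t a' 1 ≠ t a 0 := by
    rw [h0]; intro h; simpa using (t a').injective h
  have hfav1 : favorite (t a') (Function.update (fun _ => 1) (t a 0) 0) = some (t a' 1) := by
    simp [favorite, List.finRange_succ, ← h0, Function.update_of_ne hne]
  have hnot : a' ∉ (List.finRange k).map (fun x => σ x.succ.succ) := by
    simp only [List.mem_map, List.mem_finRange, true_and, not_exists]
    intro x hx
    rw [← hσ1] at hx
    have := σ.injective hx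
    simp [Fin.ext_iff] at this
  unfold SDassign priorityList
  have hl : (List.finRange (k+2)).map σ.symm.symm
      = a :: a' :: (List.finRange k).map (fun x => σ x.succ.succ) := by
    simp [List.finRange_succ, hσ0, hσ1, Function.comp_def]
  rw [hl, List.foldl_cons, List.foldl_cons, sd_foldl_preserve t a' _ hnot]
  simp only [hfav0, Nat.sub_self, hfav1, Function.update_self]

/-- Some allocation gives every object that is somebody's first choice to an agent ranking it
first: pick one such agent per object and extend this partial matching to a bijection. -/
lemma exists_alloc_d1 {k : ℕ} (t : Fin (k+2) → Pref (k+2)) :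
    ∃ y, IsAlloc (fun _ => 1) y ∧ ((univ.image fun i => t i 0).card : ℝ) ≤ d1 t y := by
  classical
  set f : Fin (k+2) → Fin (k+2) := fun i => t i 0 with hf
  have hg : ∀ j, ∃ i, j ∈ univ.image f → f i = j := by
    intro j
    by_cases hj : j ∈ univ.image f
    · obtain ⟨i, -, hi⟩ := Finset.mem_image.1 hj
      exact ⟨i, fun _ => hi⟩
    · exact ⟨0, fun h => absurd h hj⟩
  choose g hg using hg
  have hinj : Set.InjOn g (univ.image f) := by
    intro x hx y hy hxy
    rw [← hg x hx, ← hg y hy, hxy]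
  -- `σ` sends each object to the agent who receives it.
  obtain ⟨σ, hσ⟩ := Finset.exists_equiv_extend_of_card_eq
    (α := Fin (k+2)) (β := Fin (k+2)) (t := univ) (by simp) (s := univ.image f) (f := g)
    (Finset.subset_univ _) hinj
  have hsinj : Function.Injective fun j => (σ j : Fin (k+2)) :=
    fun x y h => σ.injective (Subtype.ext h)
  have hssurj := Finite.surjective_of_injective hsinj
  refine ⟨fun i j => if (σ j : Fin (k+2)) = i then 1 else 0, ⟨?_, ?_, ?_⟩, ?_⟩
  · intro i j; dsimp only; split_ifs <;> norm_num
  · intro i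
    obtain ⟨j, rfl⟩ := hssurj i
    rw [Finset.sum_eq_single j]
    · simp
    · intro b _ hb
      apply if_neg
      exact fun h => hb (hsinj h)
    · simp
  · intro j; simp
  · rw [d1_eq, Finset.sum_boole, ← Finset.card_image_of_injOn hinj]
    norm_cast
    apply Finset.card_le_card
    intro i hi
    obtain ⟨j, hj, rfl⟩ := Finset.mem_image.1 hi
    rw [Finset.mem_filter]
    refine ⟨mem_univ _, ?_⟩
    have : t (g j) 0 = j := hg j hj
    rw [this, hσ j hj]

/-- The obstruction: with this triple of agents, RSD gives the first choice of `b` with positive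
probability to `a'`, who ranks another object first. -/
lemma not_fcm {k : ℕ} (t : Fin (k+2) → Pref (k+2)) (a a' b : Fin (k+2)) (haa : a ≠ a')
    (h0 : t a 0 = t a' 0) (hb : t b 0 = t a' 1) :
    ¬ FirstChoiceMax (fun _ => 1) t (RSD (fun _ => 1) t) := by
  classical
  rintro ⟨⟨hbox, -, hcol⟩, hmax⟩
  obtain ⟨y, hy, hFy⟩ := exists_alloc_d1 t
  have h1 := hFy.trans (hmax y hy)
  obtain ⟨π, hπ⟩ := exists_sd_second t a a' haa h0
  have hpos : 0 < RSD (fun _ => 1) t a' (t a' 1) := by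
    unfold RSD
    apply div_pos _ (by positivity)
    apply Finset.sum_pos' (fun π _ => by unfold detAlloc; split_ifs <;> norm_num)
    exact ⟨π, mem_univ _, by simp [detAlloc, hπ]⟩
  have hne : t a' 0 ≠ t a' 1 := by
    intro h; simpa using (t a').injective h
  set x := RSD (fun _ => 1) t with hx
  -- Grouping agents by first choice, `d1` is a part of the total mass of the columns of first-choice
  -- objects; it omits the positive entry of `a'` in the column of its second choice.
  have h2 : d1 t x < ∑ j ∈ univ.image (fun i => t i 0), ∑ i, x i j := by
    rw [d1_eq, ← Finset.sum_fiberwise_of_maps_to (t := univ.image (fun i => t i 0))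
      (g := fun i => t i 0) (fun i _ => mem_image_of_mem _ (mem_univ i))]
    have hfib : ∀ j, ∑ i with t i 0 = j, x i (t i 0) = ∑ i with t i 0 = j, x i j := by
      intro j
      refine Finset.sum_congr rfl fun i hi => ?_
      rw [(Finset.mem_filter.1 hi).2]
    simp only [hfib]
    apply Finset.sum_lt_sum
    · intro j _
      exact Finset.sum_le_sum_of_subset_of_nonneg (Finset.filter_subset _ _)
        fun i _ _ => (hbox i j).1
    · refine ⟨t a' 1, Finset.mem_image.2 ⟨b, mem_univ _, hb⟩, ?_⟩
      apply Finset.sum_lt_sum_of_subset (Finset.filter_subset _ _) (mem_univ a') _ hpos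
        fun i _ _ => (hbox i _).1
      simp [hne]
  have h3 : ∑ j ∈ univ.image (fun i => t i 0), ∑ i, x i j
      ≤ ((univ.image fun i => t i 0).card : ℝ) := by
    calc _ ≤ ∑ j ∈ univ.image (fun i => t i 0), (1:ℝ) :=
          Finset.sum_le_sum fun j _ => by simpa using hcol j
      _ = _ := by simp
  linarith

/-! ### Counting profiles -/

lemma prod_ite_lt {n h : ℕ} (hn : h ≤ n) (x y : ℕ) :
    ∏ i : Fin n, (if (i : ℕ) < h then x else y) = x ^ h * y ^ (n - h) := by
  have h1 : (univ.filter fun i : Fin n => (i : ℕ) < h).card = h := by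
    rw [Fin.card_filter_val_lt]; omega
  have h2 := Finset.card_filter_add_card_filter_not (s := univ) (fun i : Fin n => (i : ℕ) < h)
  rw [h1, Finset.card_univ, Fintype.card_fin] at h2
  rw [Finset.prod_ite, Finset.prod_const, Finset.prod_const, h1]
  congr 2; omega

lemma card_forall_lt {α : Type*} [Fintype α] [DecidableEq α] {n h : ℕ} (hn : h ≤ n)
    (A : Finset α) :
    (univ.filter fun t : Fin n → α => ∀ i : Fin n, (i : ℕ) < h → t i ∈ A).card
      = A.card ^ h * Fintype.card α ^ (n - h) := by
  have : (univ.filter fun t : Fin n → α => ∀ i : Fin n, (i : ℕ) < h → t i ∈ A)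
      = Fintype.piFinset fun i : Fin n => if (i : ℕ) < h then A else univ := by
    ext t
    simp only [mem_filter, mem_univ, true_and, Fintype.mem_piFinset]
    refine forall_congr' fun i => ?_
    split_ifs with hi <;> simp [hi]
  rw [this, Fintype.card_piFinset, ← prod_ite_lt hn]
  refine Finset.prod_congr rfl fun i _ => ?_
  split_ifs <;> simp

/-- If at every `t ∈ E` the entries from `h` on lie in a set `G` of at most `c` elements which is
determined by the first `h` entries, then `E` has at most `c ^ (n - h) * |α| ^ h` elements: fiber
`E` over the first `h` entries. -/
lemma card_adaptive_le {α : Type*} [Fintype α] [DecidableEq α] {n h : ℕ} (hn : h ≤ n) (c : ℕ)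
    (E : Finset (Fin n → α)) (G : ({i : Fin n // (i : ℕ) < h} → α) → Finset α)
    (hG : ∀ t ∈ E, ∀ i : Fin n, ¬ (i : ℕ) < h → t i ∈ G fun i => t i)
    (hc : ∀ t ∈ E, (G fun i => t i).card ≤ c) :
    E.card ≤ c ^ (n - h) * Fintype.card α ^ h := by
  have hcard : Fintype.card {i : Fin n // (i : ℕ) < h} = h := by
    rw [Fintype.card_subtype, Fin.card_filter_val_lt]; omega
  have := Finset.card_le_mul_card_image_of_maps_to (s := E)
    (t := (univ : Finset ({i : Fin n // (i : ℕ) < h} → α)))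
    (f := fun t i => t i.1) (fun _ _ => mem_univ _) (c ^ (n - h)) ?_
  · simpa [hcard] using this
  intro u _
  by_cases hu : ∃ t ∈ E, (fun i : {i : Fin n // (i : ℕ) < h} => t i) = u
  swap
  · rw [Finset.card_eq_zero.2]
    · exact Nat.zero_le _
    · rw [Finset.filter_eq_empty_iff]
      exact fun t ht h => hu ⟨t, ht, h⟩
  obtain ⟨t₀, ht₀, rfl⟩ := hu
  calc _ ≤ (Fintype.piFinset fun i : Fin n =>
        if (i : ℕ) < h then {t₀ i} else G fun i => t₀ i).card := by
        apply Finset.card_le_card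
        intro t ht
        rw [Finset.mem_filter] at ht
        rw [Fintype.mem_piFinset]
        intro i
        split_ifs with hi
        · rw [Finset.mem_singleton]
          exact congrFun ht.2 ⟨i, hi⟩
        · rw [← ht.2]; exact hG t ht.1 i hi
    _ = 1 ^ h * (G fun i => t₀ i).card ^ (n - h) := by
        rw [Fintype.card_piFinset, ← prod_ite_lt hn]
        refine Finset.prod_congr rfl fun i _ => ?_
        split_ifs <;> simp
    _ ≤ _ := by
        rw [one_pow, one_mul]
        exact Nat.pow_le_pow_left (hc t₀ ht₀) _

/-- Few profiles have at most `s ≤ n / 64` distinct first choices among the first `h` agents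
(`n = k + 2`), by a union bound over the sets of `s` objects that could contain them. -/
lemma card_few_first {k h s : ℕ} (hh : h ≤ k + 2) (hs : s ≤ k + 2) (hs64 : 64 * s ≤ k + 2)
    (h2 : k + 2 ≤ 2 * h + 1) :
    ((univ.filter fun t : Fin (k+2) → Pref (k+2) =>
      ((univ.filter fun i : Fin (k+2) => (i : ℕ) < h).image fun i => t i 0).card ≤ s).card : ℝ)
      ≤ 2 * (1 / 16) ^ h * (Fintype.card (Pref (k+2)) : ℝ) ^ (k+2) := by
  classical
  set N := Fintype.card (Pref (k+2)) with hN
  have hA : ∀ T ∈ powersetCard s (univ : Finset (Fin (k+2))),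
      64 * (univ.filter fun p : Pref (k+2) => p 0 ∈ T).card ≤ N := by
    intro T hT
    have h1 := card_perm_mem (0 : Fin (k+2)) T
    rw [(Finset.mem_powersetCard.1 hT).2, Fintype.card_fin] at h1
    change _ = s * N at h1
    have : (k+2) * (64 * (univ.filter fun p : Pref (k+2) => p 0 ∈ T).card) ≤ (k+2) * N := by
      calc _ = 64 * s * N := by rw [mul_assoc 64 s N, ← h1]; ring
        _ ≤ _ := Nat.mul_le_mul_right _ hs64
    exact Nat.le_of_mul_le_mul_left this (by omega)
  have hsub : (univ.filter fun t : Fin (k+2) → Pref (k+2) =>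
      ((univ.filter fun i : Fin (k+2) => (i : ℕ) < h).image fun i => t i 0).card ≤ s)
      ⊆ (powersetCard s (univ : Finset (Fin (k+2)))).biUnion fun T =>
        univ.filter fun t : Fin (k+2) → Pref (k+2) => ∀ i : Fin (k+2), (i : ℕ) < h →
          t i ∈ (univ.filter fun p : Pref (k+2) => p 0 ∈ T) := by
    intro t ht
    obtain ⟨T, hT, hTs⟩ := Finset.exists_superset_card_eq (Finset.mem_filter.1 ht).2
      (by simpa using hs)
    rw [Finset.mem_biUnion]
    refine ⟨T, by simp [hTs], ?_⟩
    simp only [mem_filter, mem_univ, true_and]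
    intro i hi
    exact hT (Finset.mem_image_of_mem (fun i => t i 0) (by simp [hi]))
  have hcard := (Finset.card_le_card hsub).trans Finset.card_biUnion_le
  have hsum : ∀ T ∈ powersetCard s (univ : Finset (Fin (k+2))),
      ((univ.filter fun t : Fin (k+2) → Pref (k+2) => ∀ i : Fin (k+2), (i : ℕ) < h →
          t i ∈ (univ.filter fun p : Pref (k+2) => p 0 ∈ T)).card : ℝ)
        ≤ (1 / 64) ^ h * (N : ℝ) ^ (k+2) := by
    intro T hT
    rw [card_forall_lt hh]
    push_cast
    have h64 : (((univ.filter fun p : Pref (k+2) => p 0 ∈ T).card : ℕ) : ℝ) ≤ 1 / 64 * N := by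
      have := hA T hT
      have : (64 : ℝ) * ((univ.filter fun p : Pref (k+2) => p 0 ∈ T).card : ℕ) ≤ N := by
        exact_mod_cast this
      linarith
    calc _ ≤ (1 / 64 * (N : ℝ)) ^ h * (N : ℝ) ^ (k + 2 - h) := by gcongr
      _ = (1 / 64) ^ h * ((N : ℝ) ^ h * (N : ℝ) ^ (k + 2 - h)) := by rw [mul_pow]; ring
      _ = _ := by rw [← pow_add, Nat.add_sub_cancel' hh]
  have hpc : ((powersetCard s (univ : Finset (Fin (k+2)))).card : ℝ) ≤ 2 * 4 ^ h := by
    rw [Finset.card_powersetCard, Finset.card_univ, Fintype.card_fin]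
    calc (((k+2).choose s : ℕ) : ℝ) ≤ 2 ^ (k+2) := by exact_mod_cast Nat.choose_le_two_pow _ _
      _ ≤ 2 ^ (2 * h + 1) := by gcongr; norm_num
      _ = _ := by rw [pow_succ, pow_mul]; norm_num; ring
  calc _ ≤ ((∑ T ∈ powersetCard s (univ : Finset (Fin (k+2))),
        (univ.filter fun t : Fin (k+2) → Pref (k+2) => ∀ i : Fin (k+2), (i : ℕ) < h →
          t i ∈ (univ.filter fun p : Pref (k+2) => p 0 ∈ T)).card : ℕ) : ℝ) := by
        exact_mod_cast hcard
    _ ≤ ((powersetCard s (univ : Finset (Fin (k+2)))).card : ℝ)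
          * ((1 / 64) ^ h * (N : ℝ) ^ (k+2)) := by
        push_cast
        rw [← nsmul_eq_mul]
        exact Finset.sum_le_card_nsmul _ _ _ hsum
    _ ≤ 2 * 4 ^ h * ((1 / 64) ^ h * (N : ℝ) ^ (k+2)) := by gcongr
    _ = 2 * (4 ^ h * (1 / 64) ^ h) * (N : ℝ) ^ (k+2) := by ring
    _ = _ := by rw [← mul_pow]; norm_num

/-- If `T` contains more than `s ≈ n / 64` objects, a proportion of at least `1 / 8192` of the
preferences has both of its top two objects in `T`. -/
lemma card_avoid_pair {k s : ℕ} (hs1 : k + 2 ≤ 64 * (s + 1)) (hs2 : k + 2 ≤ 128 * s)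
    (T : Finset (Fin (k+2))) (hT : s < T.card) :
    ((univ.filter fun p : Pref (k+2) => ¬ (p 0 ∈ T ∧ p 1 ∈ T)).card : ℝ)
      ≤ (1 - 1 / 8192) * Fintype.card (Pref (k+2)) := by
  classical
  set N := Fintype.card (Pref (k+2)) with hN
  have h1 := card_perm_pair_mem (0 : Fin (k+2)) 1 (by simp) T
  change _ = _ * N at h1
  have h2 := Finset.card_filter_add_card_filter_not (s := (univ : Finset (Pref (k+2))))
    (fun p : Pref (k+2) => p 0 ∈ T ∧ p 1 ∈ T)
  rw [Finset.card_univ] at h2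
  change _ = N at h2
  set B := (univ.filter fun p : Pref (k+2) => p 0 ∈ T ∧ p 1 ∈ T).card with hB
  have hoff : ((s + 1) * s : ℕ) ≤ T.offDiag.card := by
    rw [Finset.offDiag_card]
    have : (s + 1) * s ≤ T.card * (T.card - 1) := Nat.mul_le_mul (by omega) (by omega)
    rwa [Nat.mul_sub_one] at this
  have hoffu : (univ : Finset (Fin (k+2))).offDiag.card ≤ (k+2) * (k+2) := by
    rw [Finset.offDiag_card]; simp
  have hq : (k+2) * (k+2) ≤ 8192 * ((s + 1) * s) := by
    calc _ ≤ (64 * (s+1)) * (128 * s) := Nat.mul_le_mul hs1 hs2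
      _ = _ := by ring
  have hN8 : N ≤ 8192 * B := by
    have : (k+2) * (k+2) * N ≤ (k+2) * (k+2) * (8192 * B) := by
      calc _ ≤ 8192 * T.offDiag.card * N := by
            exact Nat.mul_le_mul_right _ (hq.trans (Nat.mul_le_mul_left _ hoff))
        _ = 8192 * (B * (univ : Finset (Fin (k+2))).offDiag.card) := by rw [h1]; ring
        _ ≤ 8192 * (B * ((k+2) * (k+2))) := by gcongr
        _ = _ := by ring
    exact Nat.le_of_mul_le_mul_left this (by positivity)
  have hN8' : (N : ℝ) ≤ 8192 * B := by exact_mod_cast hN8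
  have h2' : (B : ℝ) + ((univ.filter fun p : Pref (k+2) => ¬ (p 0 ∈ T ∧ p 1 ∈ T)).card : ℝ) = N := by
    exact_mod_cast h2
  linarith

/-- Few first-choice-maximizing profiles have many distinct first choices among the first `h`
agents: none of the other agents may have both of its top two objects among these choices, since
it would form the triple of `not_fcm` with two of the first `h` agents. -/
lemma card_fcm_many {k h s : ℕ} (hh : h ≤ k + 2) (h2 : 2 * h ≤ k + 2)
    (hs1 : k + 2 ≤ 64 * (s + 1)) (hs2 : k + 2 ≤ 128 * s) (E : Finset (Fin (k+2) → Pref (k+2)))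
    (hE : ∀ t ∈ E, FirstChoiceMax (fun _ => 1) t (RSD (fun _ => 1) t))
    (hEs : ∀ t ∈ E,
      s < ((univ.filter fun i : Fin (k+2) => (i : ℕ) < h).image fun i => t i 0).card) :
    (E.card : ℝ) ≤ (1 - 1 / 8192) ^ h * (Fintype.card (Pref (k+2)) : ℝ) ^ (k+2) := by
  classical
  set N := Fintype.card (Pref (k+2)) with hN
  set c := ⌊(1 - 1 / 8192 : ℝ) * N⌋₊ with hc
  let G : ({i : Fin (k+2) // (i : ℕ) < h} → Pref (k+2)) → Finset (Pref (k+2)) := fun u =>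
    univ.filter fun p => ¬ (p 0 ∈ univ.image (fun i => u i 0) ∧ p 1 ∈ univ.image (fun i => u i 0))
  have himg : ∀ t : Fin (k+2) → Pref (k+2),
      (univ.image fun i : {i : Fin (k+2) // (i : ℕ) < h} => t i 0)
        = (univ.filter fun i : Fin (k+2) => (i : ℕ) < h).image fun i => t i 0 := by
    intro t; ext j; simp
  have hcard := card_adaptive_le hh c E G ?_ ?_
  · have hcN : (c : ℝ) ≤ (1 - 1 / 8192) * N := Nat.floor_le (by positivity)
    calc (E.card : ℝ) ≤ (c : ℝ) ^ (k + 2 - h) * (N : ℝ) ^ h := by exact_mod_cast hcard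
      _ ≤ ((1 - 1 / 8192) * N) ^ (k + 2 - h) * (N : ℝ) ^ h := by gcongr
      _ = (1 - 1 / 8192) ^ (k + 2 - h) * ((N : ℝ) ^ (k + 2 - h) * (N : ℝ) ^ h) := by
          rw [mul_pow]; ring
      _ = (1 - 1 / 8192) ^ (k + 2 - h) * (N : ℝ) ^ (k + 2) := by
          rw [← pow_add, Nat.sub_add_cancel hh]
      _ ≤ _ := by
          gcongr ?_ * _
          exact pow_le_pow_of_le_one (by norm_num) (by norm_num) (by omega)
  · intro t ht i hi
    simp only [G, mem_filter, mem_univ, true_and, mem_image]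
    rintro ⟨⟨a, ha⟩, ⟨b, hb⟩⟩
    refine not_fcm t a i b ?_ ha hb (hE t ht)
    -- The agents `a` and `i` differ because only `a` is among the first `h`.
    rintro rfl
    exact hi a.2
  · intro t ht
    apply Nat.le_floor
    refine card_avoid_pair hs1 hs2 _ ?_
    rw [himg]
    exact hEs t ht

/-! ### The limit -/

/-- for any `ε > 0` there is `n0` such that in any unit-capacity
setting with `n = #N = #M ≥ n0`, the fraction of type profiles at which `RSD(t)` is
first-choice-maximizing is smaller than `ε`. -/
theorem rsd_rarely_fcm_house_allocation (ε : ℝ) (hε : 0 < ε) :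
    ∃ n0 : ℕ, ∀ n : ℕ, n0 ≤ n →
      (Nat.card {t : Fin n → Pref n //
          FirstChoiceMax (fun _ => 1) t (RSD (fun _ => 1) t)} : ℝ)
        < ε * (Nat.card (Fin n → Pref n) : ℝ) := by
  classical
  have hlim : Filter.Tendsto (fun h : ℕ => 2 * (1 / 16 : ℝ) ^ h + (1 - 1 / 8192 : ℝ) ^ h)
      Filter.atTop (nhds (2 * 0 + 0)) :=
    ((tendsto_pow_atTop_nhds_zero_of_lt_one (by norm_num) (by norm_num)).const_mul 2).add
      (tendsto_pow_atTop_nhds_zero_of_lt_one (by norm_num) (by norm_num))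
  rw [mul_zero, add_zero] at hlim
  obtain ⟨h0, hh0⟩ := Filter.eventually_atTop.1 (hlim.eventually (gt_mem_nhds hε))
  refine ⟨max 64 (2 * h0), fun n hn => ?_⟩
  obtain ⟨k, rfl⟩ : ∃ k, n = k + 2 := ⟨n - 2, by omega⟩
  set h := (k + 2) / 2 with hh
  set s := (k + 2) / 64 with hs
  set N := Fintype.card (Pref (k+2)) with hN
  have hNpos : 0 < N := Fintype.card_pos
  set F := univ.filter fun t : Fin (k+2) → Pref (k+2) =>
    FirstChoiceMax (fun _ => 1) t (RSD (fun _ => 1) t) with hF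
  let few : (Fin (k+2) → Pref (k+2)) → Prop := fun t =>
    ((univ.filter fun i : Fin (k+2) => (i : ℕ) < h).image fun i => t i 0).card ≤ s
  have hsplit := Finset.card_filter_add_card_filter_not (s := F) few
  have hfew : ((F.filter few).card : ℝ) ≤ 2 * (1 / 16) ^ h * (N : ℝ) ^ (k+2) := by
    refine le_trans ?_ (card_few_first (h := h) (s := s) (by omega) (by omega) (by omega)
      (by omega))
    norm_cast
    exact Finset.card_le_card (Finset.filter_subset_filter _ (Finset.subset_univ _))
  have hmany : ((F.filter fun t => ¬ few t).card : ℝ)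
      ≤ (1 - 1 / 8192) ^ h * (N : ℝ) ^ (k+2) := by
    refine card_fcm_many (s := s) (by omega) (by omega) (by omega) (by omega) _ ?_ ?_
    · intro t ht
      exact (Finset.mem_filter.1 (Finset.mem_filter.1 ht).1).2
    · intro t ht
      exact not_le.1 (Finset.mem_filter.1 ht).2
  have hFcard : (Nat.card {t : Fin (k+2) → Pref (k+2) //
      FirstChoiceMax (fun _ => 1) t (RSD (fun _ => 1) t)}) = F.card := by
    rw [Nat.card_eq_fintype_card, Fintype.card_subtype]
  have htot : Nat.card (Fin (k+2) → Pref (k+2)) = N ^ (k+2) := by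
    rw [Nat.card_eq_fintype_card, Fintype.card_fun, Fintype.card_fin]
  rw [hFcard, htot, ← hsplit]
  push_cast
  have hlt := hh0 h (by omega)
  have hpos : (0 : ℝ) < (N : ℝ) ^ (k+2) := by positivity
  calc _ ≤ (2 * (1 / 16 : ℝ) ^ h + (1 - 1 / 8192 : ℝ) ^ h) * (N : ℝ) ^ (k+2) := by
        rw [add_mul]; exact add_le_add hfew hmany
    _ < _ := mul_lt_mul_of_pos_right hlt hpos
end

section
/- In large house allocation markets, the share of profiles at which RSD rank dominates ABM vanishes: for the settings with n agents, n objects, and q_j = 1 for all j ∈ M, the fraction of type profiles t ∈ T^n at which RSD(t) weakly rank dominates ABM(t) tends to 0 as n → ∞. -/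
/-!
Only the number of first choices (the inequality `K = 0` of rank domination) is needed. For
every priority ordering ABM hands each object that is somebody's first choice to an agent
ranking it first (`card_firstServed_ABM_ge`), and no ordering lets the serial dictatorship
serve more first choices than that (`card_firstServed_SD_le`). The dictatorship serves
strictly fewer if the two leading agents share their first choice and the second choice of
the second one is the first choice of some agent (`card_firstServed_SD_lt`). Hence weak rank
domination of ABM by RSD forces the profile to be `RivalryFree`
(`RivalryFree.of_weakRankDom`).

It remains to see that rivalry-free profiles are rare. Fix the first choices
`f : Fin n → Fin n`. The second choices are then independent, and each agent sharing its first
choice must have its second choice outside the image of `f`. If the image has at least `n / 4`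
elements and at least `r` agents share their first choice, this has conditional probability
at most `(4 / 5) ^ r` (`card_rivalryFree_fiber_le`). The image has fewer than `n / 4` elements
with probability at most `2 ^ (-n)` (`card_small_image_le`), and if fewer than `r` agents
share their first choice then `f` is injective off a set of size `r`, which has
probability at most `n ^ (2 * r) * n! / n ^ n ≤ 2 * n ^ (2 * r) * 2 ^ (-n)`
(`card_few_contested_le`, `factorial_mul_two_pow_le`). Letting `n → ∞` and then `r → ∞`
gives the claim.
-/

open Finset

/-! ### The two mechanisms with unit capacities -/

/-- The invariant of the serial dictatorship with unit capacities: an assigned object is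
used up, and no object is assigned twice. -/
def OneToOne {n m : ℕ} (s : (Fin n → Option (Fin m)) × (Fin m → ℕ)) : Prop :=
  (∀ j, s.2 j ≤ 1) ∧ (∀ i j, s.1 i = some j → s.2 j = 0) ∧
    ∀ i i' j, s.1 i = some j → s.1 i' = some j → i = i'

/-- One step of the serial dictatorship: agent `i` takes its favorite remaining object. -/
def sdStep {n m : ℕ} (t : Fin n → Pref m) (s : (Fin n → Option (Fin m)) × (Fin m → ℕ))
    (i : Fin n) : (Fin n → Option (Fin m)) × (Fin m → ℕ) :=
  match favorite (t i) s.2 with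
  | none => s
  | some j => (Function.update s.1 i (some j), Function.update s.2 j (s.2 j - 1))

lemma favorite_pos {m : ℕ} {ti : Pref m} {cap : Fin m → ℕ} {j : Fin m}
    (h : favorite ti cap = some j) : 0 < cap j := by
  unfold favorite at h
  rw [Option.map_eq_some_iff] at h
  obtain ⟨k, hk, rfl⟩ := h
  simpa using List.find?_some hk

lemma favorite_zero {m : ℕ} {ti : Pref (m + 2)} {cap : Fin (m + 2) → ℕ}
    (h : 0 < cap (ti 0)) : favorite ti cap = some (ti 0) := by
  simp [favorite, List.finRange_succ, h]

lemma favorite_one {m : ℕ} {ti : Pref (m + 2)} {cap : Fin (m + 2) → ℕ}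
    (h0 : cap (ti 0) = 0) (h : 0 < cap (ti 1)) : favorite ti cap = some (ti 1) := by
  simp [favorite, List.finRange_succ, h, h0]

lemma OneToOne.sdStep {n m : ℕ} (t : Fin n → Pref m)
    {s : (Fin n → Option (Fin m)) × (Fin m → ℕ)} (hs : OneToOne s) (i : Fin n) :
    OneToOne (sdStep t s i) := by
  unfold _root_.sdStep
  rcases hf : favorite (t i) s.2 with _ | j
  · exact hs
  · have hpos := favorite_pos hf
    obtain ⟨h1, h2, h3⟩ := hs
    have hj := h1 j
    refine ⟨fun j' => ?_, fun i' j' h => ?_, fun a b j' ha hb => ?_⟩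
    · simp only [Function.update_apply]
      have := h1 j'
      grind
    · simp only [Function.update_apply] at h ⊢
      grind
    · simp only [Function.update_apply] at ha hb
      grind

lemma OneToOne.foldl {n m : ℕ} (t : Fin n → Pref m) (l : List (Fin n))
    {s : (Fin n → Option (Fin m)) × (Fin m → ℕ)} (hs : OneToOne s) :
    OneToOne (l.foldl (_root_.sdStep t) s) := by
  induction l generalizing s with
  | nil => exact hs
  | cons i l ih => exact ih (hs.sdStep t i)

lemma oneToOne_init {n m : ℕ} :
    OneToOne ((fun _ => none, fun _ => 1) : (Fin n → Option (Fin m)) × (Fin m → ℕ)) :=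
  ⟨fun _ => le_rfl, fun _ _ h => by simp at h, fun _ _ _ h => by simp at h⟩

lemma SDassign_eq {n m : ℕ} (q : Fin m → ℕ) (t : Fin n → Pref m) (π : Equiv.Perm (Fin n)) :
    SDassign q t π = ((priorityList π).foldl (sdStep t) ((fun _ => none), q)).1 := rfl

lemma SDassign_inj {n m : ℕ} (t : Fin n → Pref m) (π : Equiv.Perm (Fin n)) (i i' : Fin n)
    (j : Fin m) (h : SDassign (fun _ => 1) t π i = some j)
    (h' : SDassign (fun _ => 1) t π i' = some j) : i = i' := by
  rw [SDassign_eq] at h h'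
  exact (oneToOne_init.foldl t _).2.2 i i' j h h'

lemma sd_foldl_of_notMem {n m : ℕ} (t : Fin n → Pref m) (l : List (Fin n)) (b : Fin n)
    (hb : b ∉ l) (s : (Fin n → Option (Fin m)) × (Fin m → ℕ)) :
    (l.foldl (sdStep t) s).1 b = s.1 b := by
  induction l generalizing s with
  | nil => rfl
  | cons i l ih =>
    simp only [List.mem_cons, not_or] at hb
    rw [List.foldl_cons, ih hb.2]
    unfold sdStep
    split
    · rfl
    · simp [hb.1]

/-- If the two agents with the highest priority share their first choice, the second of
them is served its second choice. -/
lemma SDassign_second {m : ℕ} (t : Fin (m + 2) → Pref (m + 2))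
    (π : Equiv.Perm (Fin (m + 2))) (h : t (π.symm 0) 0 = t (π.symm 1) 0) :
    SDassign (fun _ => 1) t π (π.symm 1) = some (t (π.symm 1) 1) := by
  have hne : t (π.symm 1) 1 ≠ t (π.symm 1) 0 := by simp
  have hl : priorityList π = π.symm 0 :: π.symm 1 ::
      (List.finRange m).map (fun k => π.symm k.succ.succ) := by
    simp [priorityList, List.finRange_succ, Function.comp_def]
  rw [SDassign_eq, hl, List.foldl_cons, List.foldl_cons, sd_foldl_of_notMem]
  · have h0 : sdStep t ((fun _ => none), fun _ => 1) (π.symm 0)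
        = (Function.update (fun _ => none) (π.symm 0) (some (t (π.symm 0) 0)),
            Function.update (fun _ => 1) (t (π.symm 0) 0) (1 - 1)) := by
      unfold sdStep
      simp [favorite_zero]
    rw [h0]
    unfold sdStep
    rw [favorite_one]
    · simp
    · simp [h]
    · simp [h, hne]
  · simp only [List.mem_map, List.mem_finRange, true_and, not_exists, EmbeddingLike.apply_eq_iff_eq]
    intro k hk
    simp [Fin.ext_iff] at hk

/-- The set of agents that receive their first choice. -/
def firstServed {n m : ℕ} (t : Fin n → Pref (m + 2)) (x : Fin n → Option (Fin (m + 2))) :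
    Finset (Fin n) :=
  univ.filter fun i => x i = some (t i 0)

/-- Agents receiving their first choice have distinct first choices. -/
lemma card_firstServed_SD_le {m : ℕ} (t : Fin (m + 2) → Pref (m + 2))
    (π : Equiv.Perm (Fin (m + 2))) :
    (firstServed t (SDassign (fun _ => 1) t π)).card ≤ (univ.image fun i => t i 0).card := by
  refine Finset.card_le_card_of_injOn (fun i => t i 0) (fun i _ => by simp) ?_
  intro i hi i' hi' h
  simp only [firstServed, coe_filter, mem_univ, true_and, Set.mem_ofPred_eq] at hi hi' h
  rw [h] at hi
  exact SDassign_inj t π i i' _ hi hi'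

/-- When the two leading agents compete for the same object and the second choice of the
loser is a first choice of somebody else, that object is lost as a first choice. -/
lemma card_firstServed_SD_lt {m : ℕ} (t : Fin (m + 2) → Pref (m + 2))
    (π : Equiv.Perm (Fin (m + 2))) (c : Fin (m + 2))
    (h : t (π.symm 0) 0 = t (π.symm 1) 0) (hc : t (π.symm 1) 1 = t c 0) :
    (firstServed t (SDassign (fun _ => 1) t π)).card < (univ.image fun i => t i 0).card := by
  have hb := SDassign_second t π h
  have hmem : t (π.symm 1) 1 ∈ univ.image fun i => t i 0 := by
    rw [hc]; exact mem_image_of_mem _ (mem_univ c)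
  refine lt_of_le_of_lt ?_ (Finset.card_erase_lt_of_mem hmem)
  refine Finset.card_le_card_of_injOn (fun i => t i 0) (fun i hi => ?_) ?_
  · simp only [firstServed, coe_filter, mem_univ, true_and, Set.mem_ofPred_eq] at hi
    simp only [coe_erase, coe_image, coe_univ, Set.image_univ, Set.mem_sdiff, Set.mem_range,
      exists_apply_eq_apply, Set.mem_singleton_iff, true_and]
    intro hi0
    rw [hi0] at hi
    have := SDassign_inj t π _ _ _ hi hb
    subst this
    simp at hi0
  · intro i hi i' hi' h
    simp only [firstServed, coe_filter, mem_univ, true_and, Set.mem_ofPred_eq] at hi hi' h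
    rw [h] at hi
    exact SDassign_inj t π i i' _ hi hi'

/-- One step of a Boston round: agent `i` applies to `choice i`, if still unassigned. -/
def bostonStep {n m : ℕ} (choice : Fin n → Option (Fin m))
    (s : (Fin n → Option (Fin m)) × (Fin m → ℕ)) (i : Fin n) :
    (Fin n → Option (Fin m)) × (Fin m → ℕ) :=
  match s.1 i with
  | some _ => s
  | none =>
    match choice i with
    | none => s
    | some j =>
      if 0 < s.2 j then
        (Function.update s.1 i (some j), Function.update s.2 j (s.2 j - 1))
      else s

lemma applyRound_eq {n m : ℕ} (choice : Fin n → Option (Fin m)) (order : List (Fin n))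
    (st : (Fin n → Option (Fin m)) × (Fin m → ℕ)) :
    applyRound choice order st = order.foldl (bostonStep choice) st := rfl

lemma bostonStep_some {n m : ℕ} (choice : Fin n → Option (Fin m))
    (s : (Fin n → Option (Fin m)) × (Fin m → ℕ)) (i a : Fin n) (j : Fin m)
    (h : s.1 a = some j) : (bostonStep choice s i).1 a = some j := by
  unfold bostonStep
  split
  · exact h
  · split
    · exact h
    · split
      · simp only [Function.update_apply]
        grind
      · exact h

lemma applyRound_some {n m : ℕ} (choice : Fin n → Option (Fin m)) (order : List (Fin n))
    (s : (Fin n → Option (Fin m)) × (Fin m → ℕ)) (a : Fin n) (j : Fin m)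
    (h : s.1 a = some j) : (applyRound choice order s).1 a = some j := by
  rw [applyRound_eq]
  induction order generalizing s with
  | nil => exact h
  | cons i l ih => exact ih _ (bostonStep_some choice s i a j h)

/-- The invariant of the first Boston round, in which `i` applies to `c i`: the objects
used up are exactly those given to an agent that applied for them. -/
def RoundInv {n m : ℕ} (c : Fin n → Fin m)
    (s : (Fin n → Option (Fin m)) × (Fin m → ℕ)) : Prop :=
  (∀ j, s.2 j ≤ 1) ∧ (∀ i j, s.1 i = some j → j = c i ∧ s.2 j = 0) ∧
    ∀ j, s.2 j = 0 → ∃ i, s.1 i = some j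

lemma RoundInv.bostonStep {n m : ℕ} (c : Fin n → Fin m)
    {s : (Fin n → Option (Fin m)) × (Fin m → ℕ)} (hs : RoundInv c s) (i : Fin n) :
    RoundInv c (bostonStep (fun i => some (c i)) s i) ∧
      (bostonStep (fun i => some (c i)) s i).2 (c i) = 0 ∧
      ∀ j, s.2 j = 0 → (bostonStep (fun i => some (c i)) s i).2 j = 0 := by
  obtain ⟨h1, h2, h3⟩ := hs
  unfold _root_.bostonStep
  rcases hi : s.1 i with _ | j
  · by_cases hp : 0 < s.2 (c i)
    · have hci := h1 (c i)
      simp only [hp, if_true]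
      refine ⟨⟨fun j => ?_, fun a j h => ?_, fun j h => ?_⟩, ?_, fun j hj => ?_⟩
      · have := h1 j
        simp only [Function.update_apply]
        grind
      · simp only [Function.update_apply] at h ⊢
        grind
      · by_cases hj : j = c i
        · exact ⟨i, by simp [hj]⟩
        · simp only [Function.update_apply, hj, if_false] at h
          obtain ⟨a, ha⟩ := h3 j h
          refine ⟨a, ?_⟩
          simp only [Function.update_apply]
          grind
      · simp only [Function.update_self]
        omega
      · simp only [Function.update_apply]
        grind
    · simp only [hp, if_false]
      exact ⟨⟨h1, h2, h3⟩, by omega, fun j hj => hj⟩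
  · exact ⟨⟨h1, h2, h3⟩, by grind, fun j hj => hj⟩

lemma RoundInv.foldl {n m : ℕ} (c : Fin n → Fin m) (l : List (Fin n))
    {s : (Fin n → Option (Fin m)) × (Fin m → ℕ)} (hs : RoundInv c s) :
    RoundInv c (l.foldl (_root_.bostonStep fun i => some (c i)) s) ∧
      (∀ i ∈ l, (l.foldl (_root_.bostonStep fun i => some (c i)) s).2 (c i) = 0) ∧
      ∀ j, s.2 j = 0 → (l.foldl (_root_.bostonStep fun i => some (c i)) s).2 j = 0 := by
  induction l generalizing s with
  | nil => exact ⟨hs, by simp, fun j hj => hj⟩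
  | cons i l ih =>
    obtain ⟨g1, g2, g3⟩ := hs.bostonStep c i
    obtain ⟨k1, k2, k3⟩ := ih g1
    refine ⟨k1, fun a ha => ?_, fun j hj => k3 j (g3 j hj)⟩
    rcases List.mem_cons.1 ha with rfl | ha
    · exact k3 _ g2
    · exact k2 a ha

/-- The adaptive Boston mechanism gives every object that is somebody's first choice to
an agent ranking it first. -/
lemma card_firstServed_ABM_ge {m : ℕ} (t : Fin (m + 2) → Pref (m + 2))
    (π : Equiv.Perm (Fin (m + 2))) :
    (univ.image fun i => t i 0).card ≤ (firstServed t (ABMassign (fun _ => 1) t π)).card := by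
  have hround : ∀ (k : ℕ) (s : (Fin (m + 2) → Option (Fin (m + 2))) × (Fin (m + 2) → ℕ))
      (a j : Fin (m + 2)), s.1 a = some j →
      ((fun st => applyRound (fun i => favorite (t i) st.2) (priorityList π) st)^[k] s).1 a
        = some j := by
    intro k
    induction k with
    | zero => exact fun s a j h => h
    | succ k ih =>
      intro s a j h
      rw [Function.iterate_succ_apply]
      exact ih _ _ _ (applyRound_some _ _ _ _ _ h)
  -- The first round already settles all first choices: `hround` says that assignments persist.
  refine le_trans (Finset.card_le_card ?_) (Finset.card_image_le (f := fun i => t i 0))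
  intro j hj
  obtain ⟨i, -, rfl⟩ := mem_image.1 hj
  have hinit : RoundInv (fun i => t i 0)
      ((fun _ => none, fun _ => 1) :
        (Fin (m + 2) → Option (Fin (m + 2))) × (Fin (m + 2) → ℕ)) :=
    ⟨fun _ => le_rfl, fun _ _ h => by simp at h, fun _ h => by simp at h⟩
  obtain ⟨⟨-, k2, k3⟩, kl, -⟩ := hinit.foldl (fun i => t i 0) (priorityList π)
  have hil : i ∈ priorityList π := by
    simp only [priorityList, List.mem_map, List.mem_finRange, true_and]
    exact ⟨π i, by simp⟩
  obtain ⟨a, ha⟩ := k3 _ (kl i hil)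
  have ha0 := (k2 _ _ ha).1
  simp only at ha0
  refine mem_image.2 ⟨a, ?_, ha0.symm⟩
  simp only [firstServed, mem_filter, mem_univ, true_and]
  rw [← ha0]
  unfold ABMassign
  rw [Function.iterate_succ_apply]
  apply hround
  have hfav : (fun i => favorite (t i) (fun _ => 1)) = fun i => some (t i 0) :=
    funext fun i => favorite_zero (by simp)
  rw [applyRound_eq]
  simp only [hfav]
  exact ha

lemma rankDist_zero_avg {m : ℕ} (t : Fin (m + 2) → Pref (m + 2))
    (x : Equiv.Perm (Fin (m + 2)) → Fin (m + 2) → Option (Fin (m + 2))) :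
    rankDist t (fun i j => (∑ π, detAlloc (x π) i j) / ((m + 2).factorial : ℝ)) 0
      = (∑ π, ((firstServed t (x π)).card : ℝ)) / ((m + 2).factorial : ℝ) := by
  unfold rankDist
  rw [← Finset.sum_div, Finset.sum_comm]
  congr 1
  refine Finset.sum_congr rfl fun π _ => ?_
  simp [detAlloc, firstServed]

/-- A profile is rivalry-free if whenever an agent `b` shares its first choice with another
agent, the second choice of `b` is nobody's first choice. -/
def RivalryFree {m : ℕ} (t : Fin (m + 2) → Pref (m + 2)) : Prop :=
  ∀ a b c, a ≠ b → t a 0 = t b 0 → t b 1 ≠ t c 0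

lemma RivalryFree.of_weakRankDom {m : ℕ} {t : Fin (m + 2) → Pref (m + 2)}
    (h : WeakRankDom t (RSD (fun _ => 1) t) (ABM (fun _ => 1) t)) : RivalryFree t := by
  intro a b c hab h0 h1
  have hK := h 0
  have hI : Finset.Iic (0 : Fin (m + 2)) = {0} := by
    ext k; simp [Finset.mem_Iic]
  rw [hI, sum_singleton, sum_singleton] at hK
  have e1 := rankDist_zero_avg t (ABMassign (fun _ => 1) t)
  have e2 := rankDist_zero_avg t (SDassign (fun _ => 1) t)
  unfold ABM RSD at hK
  rw [e1, e2, div_le_div_iff_of_pos_right (by positivity)] at hK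
  obtain ⟨σ, hσ0, hσ1⟩ : ∃ σ : Equiv.Perm (Fin (m + 2)), σ 0 = a ∧ σ 1 = b := by
    refine ⟨(Equiv.swap 0 a).trans (Equiv.swap (Equiv.swap 0 a 1) b), ?_, ?_⟩
    · have h2 : Equiv.swap 0 a 1 ≠ a := by
        intro h'
        rw [Equiv.swap_apply_eq_iff, Equiv.swap_apply_right] at h'
        exact one_ne_zero h'
      simp [Equiv.swap_apply_of_ne_of_ne h2.symm hab]
    · simp
  -- `σ.symm` gives `a` and `b` the two highest priorities, so the sums differ there.
  refine absurd hK (not_le.2 ?_)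
  refine Finset.sum_lt_sum (fun π _ => ?_) ⟨σ.symm, mem_univ _, ?_⟩
  · exact_mod_cast (card_firstServed_SD_le t π).trans (card_firstServed_ABM_ge t π)
  · have := card_firstServed_SD_lt t σ.symm c (by simpa [hσ0, hσ1] using h0)
      (by simpa [hσ1] using h1)
    exact_mod_cast this.trans_le (card_firstServed_ABM_ge t σ.symm)

/-! ### Counting preferences with prescribed first and second choices -/

lemma decomposeFin_fst {n : ℕ} (p : Equiv.Perm (Fin (n + 1))) :
    (Equiv.Perm.decomposeFin p).1 = p 0 := by
  conv_rhs => rw [← Equiv.Perm.decomposeFin.symm_apply_apply p]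
  rw [← Prod.mk.eta (p := Equiv.Perm.decomposeFin p),
    Equiv.Perm.decomposeFin_symm_apply_zero]

lemma card_first_eq_le {m : ℕ} (a : Fin (m + 2)) :
    (univ.filter fun p : Pref (m + 2) => p 0 = a).card ≤ (m + 1).factorial := by
  have h : (univ : Finset (Equiv.Perm (Fin (m + 1)))).card = (m + 1).factorial := by
    rw [card_univ, Fintype.card_perm, Fintype.card_fin]
  rw [← h]
  refine Finset.card_le_card_of_injOn (fun p => (Equiv.Perm.decomposeFin p).2)
    (fun _ _ => by simp) ?_
  intro p hp q hq hpq
  simp only [coe_filter, mem_univ, true_and, Set.mem_ofPred_eq] at hp hq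
  refine Equiv.Perm.decomposeFin.injective (Prod.ext ?_ hpq)
  rw [decomposeFin_fst, decomposeFin_fst, hp, hq]

/-- Removing the first and then the second value of a permutation leaves a permutation of
the remaining `m` positions, which together with `a` and `b` determines it. -/
lemma card_first_second_eq_le {m : ℕ} (a b : Fin (m + 2)) :
    (univ.filter fun p : Pref (m + 2) => p 0 = a ∧ p 1 = b).card ≤ m.factorial := by
  have h : (univ : Finset (Equiv.Perm (Fin m))).card = m.factorial := by
    rw [card_univ, Fintype.card_perm, Fintype.card_fin]
  rw [← h]
  refine Finset.card_le_card_of_injOn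
    (fun p => (Equiv.Perm.decomposeFin (Equiv.Perm.decomposeFin p).2).2)
    (fun _ _ => by simp) ?_
  intro p hp q hq hpq
  simp only [coe_filter, mem_univ, true_and, Set.mem_ofPred_eq] at hp hq
  have key : ∀ r : Equiv.Perm (Fin (m + 2)), r 1
      = Equiv.swap 0 (r 0) ((Equiv.Perm.decomposeFin r).2 0).succ := by
    intro r
    conv_lhs => rw [← Equiv.Perm.decomposeFin.symm_apply_apply r]
    rw [← Prod.mk.eta (p := Equiv.Perm.decomposeFin r),
      Equiv.Perm.decomposeFin_symm_apply_one, decomposeFin_fst]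
  have h0 : p 0 = q 0 := hp.1.trans hq.1.symm
  have h1 : (Equiv.Perm.decomposeFin p).2 0 = (Equiv.Perm.decomposeFin q).2 0 := by
    have e : p 1 = q 1 := hp.2.trans hq.2.symm
    rw [key p, key q, h0] at e
    exact Fin.succ_injective _ ((Equiv.swap 0 (q 0)).injective e)
  refine Equiv.Perm.decomposeFin.injective (Prod.ext ?_ ?_)
  · rw [decomposeFin_fst, decomposeFin_fst, h0]
  · refine Equiv.Perm.decomposeFin.injective (Prod.ext ?_ hpq)
    rw [decomposeFin_fst, decomposeFin_fst, h1]

lemma card_first_second_notMem_le {m : ℕ} (a : Fin (m + 2)) (S : Finset (Fin (m + 2))) :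
    (univ.filter fun p : Pref (m + 2) => p 0 = a ∧ p 1 ∉ S).card
      ≤ (m + 2 - S.card) * m.factorial := by
  have hsub : (univ.filter fun p : Pref (m + 2) => p 0 = a ∧ p 1 ∉ S)
      ⊆ Sᶜ.biUnion fun b => univ.filter fun p : Pref (m + 2) => p 0 = a ∧ p 1 = b := by
    intro p hp
    simp only [mem_filter, mem_univ, true_and] at hp
    simp [hp]
  refine (Finset.card_le_card hsub).trans ((Finset.card_biUnion_le_card_mul _ _ m.factorial
    fun b _ => card_first_second_eq_le a b).trans ?_)
  rw [card_compl, Fintype.card_fin]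

/-- The agents whose first choice under `f` is shared by another agent. -/
def contested {m : ℕ} (f : Fin (m + 2) → Fin (m + 2)) : Finset (Fin (m + 2)) :=
  univ.filter fun i => ∃ a, a ≠ i ∧ f a = f i

/-- Given the first choices `f`, the second choices are independent and each contested
agent avoids the image of `f` with conditional probability at most `4 / 5` as soon as the
image contains at least a quarter of the objects. -/
lemma card_rivalryFree_fiber_le {m r : ℕ} (hm : 14 ≤ m) (f : Fin (m + 2) → Fin (m + 2))
    (hS : m + 2 ≤ 4 * (univ.image f).card) (hr : r ≤ (contested f).card) :
    (Nat.card {t : Fin (m + 2) → Pref (m + 2) // RivalryFree t ∧ (fun i => t i 0) = f} : ℝ)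
      ≤ ((m + 1).factorial : ℝ) ^ (m + 2) * (4 / 5 : ℝ) ^ r := by
  classical
  set W : Fin (m + 2) → Finset (Pref (m + 2)) := fun i =>
    univ.filter fun p => p 0 = f i ∧ (i ∈ contested f → p 1 ∉ univ.image f) with hW
  have hsub : (univ.filter fun t : Fin (m + 2) → Pref (m + 2) =>
      RivalryFree t ∧ (fun i => t i 0) = f) ⊆ Fintype.piFinset W := by
    intro t ht
    simp only [mem_filter, mem_univ, true_and] at ht
    obtain ⟨ht, rfl⟩ := ht
    simp only [Fintype.mem_piFinset, hW, mem_filter, mem_univ, true_and]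
    intro b hb
    simp only [contested, mem_filter, mem_univ, true_and] at hb
    obtain ⟨a, hab, h⟩ := hb
    simp only [mem_image, mem_univ, true_and, not_exists]
    exact fun c hc => ht a b c hab h hc.symm
  have hcard : ∀ i, ((W i).card : ℝ) ≤
      (m + 1).factorial * (if i ∈ contested f then (4 / 5 : ℝ) else 1) := by
    intro i
    split_ifs with hi
    · have h1 : (W i).card ≤ (m + 2 - (univ.image f).card) * m.factorial := by
        refine le_trans (Finset.card_le_card ?_)
          (card_first_second_notMem_le (f i) (univ.image f))
        intro p hp
        simp only [hW, mem_filter, mem_univ, true_and] at hp ⊢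
        exact ⟨hp.1, hp.2 hi⟩
      -- Since `3 (m + 2) / 4 ≤ 4 (m + 1) / 5` for `14 ≤ m`.
      have h2 : 5 * (m + 2 - (univ.image f).card) ≤ 4 * (m + 1) := by omega
      have h3 : 5 * (W i).card ≤ 4 * (m + 1).factorial := by
        rw [Nat.factorial_succ]
        nlinarith [Nat.mul_le_mul_right m.factorial h2]
      have h4 : (5 : ℝ) * (W i).card ≤ 4 * (m + 1).factorial := by exact_mod_cast h3
      linarith
    · rw [mul_one]
      have h1 : (W i).card ≤ (m + 1).factorial := by
        refine le_trans (Finset.card_le_card ?_) (card_first_eq_le (f i))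
        intro p hp
        simp only [hW, mem_filter, mem_univ, true_and] at hp ⊢
        exact hp.1
      exact_mod_cast h1
  rw [Nat.card_eq_fintype_card, Fintype.card_subtype]
  calc ((univ.filter fun t : Fin (m + 2) → Pref (m + 2) =>
          RivalryFree t ∧ (fun i => t i 0) = f).card : ℝ)
      ≤ ((Fintype.piFinset W).card : ℝ) := by exact_mod_cast Finset.card_le_card hsub
    _ = ∏ i, ((W i).card : ℝ) := by rw [Fintype.card_piFinset]; push_cast; rfl
    _ ≤ ∏ i, ((m + 1).factorial * (if i ∈ contested f then (4 / 5 : ℝ) else 1)) :=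
        Finset.prod_le_prod (fun i _ => by positivity) fun i _ => hcard i
    _ = ((m + 1).factorial : ℝ) ^ (m + 2) * (4 / 5 : ℝ) ^ (contested f).card := by
        rw [Finset.prod_mul_distrib, Finset.prod_ite, prod_const, prod_const, prod_const_one,
          mul_one, card_univ, Fintype.card_fin, filter_mem_eq_inter, univ_inter]
    _ ≤ _ := by
        gcongr ?_ * ?_
        exact pow_le_pow_of_le_one (by norm_num) (by norm_num) hr

/-- The bound without the factor coming from the second choices, valid for every `f`. -/
lemma card_fiber_le {m : ℕ} (f : Fin (m + 2) → Fin (m + 2)) :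
    (Nat.card {t : Fin (m + 2) → Pref (m + 2) // RivalryFree t ∧ (fun i => t i 0) = f} : ℝ)
      ≤ ((m + 1).factorial : ℝ) ^ (m + 2) := by
  classical
  have hsub : (univ.filter fun t : Fin (m + 2) → Pref (m + 2) =>
      RivalryFree t ∧ (fun i => t i 0) = f) ⊆
      Fintype.piFinset fun i => univ.filter fun p : Pref (m + 2) => p 0 = f i := by
    intro t ht
    simp only [mem_filter, mem_univ, true_and] at ht
    simp [Fintype.mem_piFinset, ← ht.2]
  rw [Nat.card_eq_fintype_card, Fintype.card_subtype]
  have h := (Finset.card_le_card hsub).trans_eq (Fintype.card_piFinset _)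
  have h2 := h.trans (Finset.prod_le_prod' fun i _ => card_first_eq_le (f i))
  rw [prod_const, card_univ, Fintype.card_fin] at h2
  exact_mod_cast h2

/-! ### Counting the exceptional first-choice functions -/

/-- Functions with a small image are rare: the image is one of at most `2 ^ n` sets, each
of which has at most `n / 4` elements. -/
lemma card_small_image_le (n : ℕ) :
    ((univ.filter fun f : Fin n → Fin n => 4 * (univ.image f).card < n).card : ℝ)
      ≤ (n : ℝ) ^ n * (1 / 2 : ℝ) ^ n := by
  have hsub : (univ.filter fun f : Fin n → Fin n => 4 * (univ.image f).card < n) ⊆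
      (univ.filter fun S : Finset (Fin n) => 4 * S.card < n).biUnion
        fun S => Fintype.piFinset fun _ => S := by
    intro f hf
    simp only [mem_filter, mem_univ, true_and] at hf
    simp only [mem_biUnion, mem_filter, mem_univ, true_and, Fintype.mem_piFinset]
    exact ⟨univ.image f, hf, fun i => mem_image_of_mem _ (mem_univ i)⟩
  have h1 := (Finset.card_le_card hsub).trans Finset.card_biUnion_le
  have h1' : ((univ.filter fun f : Fin n → Fin n => 4 * (univ.image f).card < n).card : ℝ) ≤
      ∑ S ∈ univ.filter (fun S : Finset (Fin n) => 4 * S.card < n),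
        ((Fintype.piFinset fun _ : Fin n => S).card : ℝ) := by exact_mod_cast h1
  refine h1'.trans ?_
  calc ∑ S ∈ univ.filter (fun S : Finset (Fin n) => 4 * S.card < n),
        ((Fintype.piFinset fun _ : Fin n => S).card : ℝ)
      ≤ ∑ S ∈ univ.filter (fun S : Finset (Fin n) => 4 * S.card < n), ((n : ℝ) / 4) ^ n := by
        refine Finset.sum_le_sum fun S hS => ?_
        simp only [mem_filter, mem_univ, true_and] at hS
        rw [Fintype.card_piFinset, prod_const, card_univ, Fintype.card_fin]
        push_cast
        have : (4 : ℝ) * S.card < n := by exact_mod_cast hS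
        gcongr
        linarith
    _ ≤ ∑ S : Finset (Fin n), ((n : ℝ) / 4) ^ n :=
        Finset.sum_le_sum_of_subset_of_nonneg (filter_subset _ _)
          fun _ _ _ => by positivity
    _ = (n : ℝ) ^ n * (1 / 2 : ℝ) ^ n := by
        rw [sum_const, card_univ, Fintype.card_finset, Fintype.card_fin, nsmul_eq_mul]
        push_cast
        rw [← mul_pow, ← mul_pow]
        congr 1
        ring

/-- Such a function is arbitrary on `R` and an embedding on the complement. -/
lemma card_injOn_compl_le {n : ℕ} (R : Finset (Fin n)) :
    Nat.card {f : Fin n → Fin n // Set.InjOn f (Rᶜ : Finset (Fin n))}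
      ≤ n ^ R.card * n.factorial := by
  classical
  let g : {f : Fin n → Fin n // Set.InjOn f (Rᶜ : Finset (Fin n))} →
      (R → Fin n) × ((Rᶜ : Finset (Fin n)) ↪ Fin n) := fun f =>
    (fun i => f.1 i, ⟨fun i => f.1 i, fun i j h => Subtype.ext (f.2 i.2 j.2 h)⟩)
  have hg : Function.Injective g := by
    rintro ⟨f, hf⟩ ⟨f', hf'⟩ h
    refine Subtype.ext (funext fun i => ?_)
    have h1 := congrArg Prod.fst h
    have h2 := congrArg Prod.snd h
    by_cases hi : i ∈ R
    · exact congrFun h1 ⟨i, hi⟩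
    · exact DFunLike.congr_fun h2 ⟨i, mem_compl.2 hi⟩
  refine (Nat.card_le_card_of_injective g hg).trans ?_
  rw [Nat.card_eq_fintype_card, Fintype.card_prod, Fintype.card_fun, Fintype.card_embedding_eq]
  simp only [Fintype.card_coe, Fintype.card_fin]
  refine Nat.mul_le_mul_left _ ?_
  have hle : (Rᶜ : Finset (Fin n)).card ≤ n := by simpa using Finset.card_le_univ (Rᶜ)
  rw [← Nat.factorial_mul_descFactorial hle]
  exact Nat.le_mul_of_pos_left _ (Nat.factorial_pos _)

/-- Functions with few contested agents are rare: they become injective after the removal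
of `r` agents. -/
lemma card_few_contested_le {m r : ℕ} (hr : r ≤ m + 2) :
    (univ.filter fun f : Fin (m + 2) → Fin (m + 2) => (contested f).card < r).card
      ≤ (m + 2) ^ (2 * r) * (m + 2).factorial := by
  classical
  have hsub : (univ.filter fun f : Fin (m + 2) → Fin (m + 2) => (contested f).card < r) ⊆
      (powersetCard r univ).biUnion fun R => univ.filter fun f : Fin (m + 2) → Fin (m + 2) =>
        Set.InjOn f (Rᶜ : Finset (Fin (m + 2))) := by
    intro f hf
    simp only [mem_filter, mem_univ, true_and] at hf
    obtain ⟨R, hR, -, hRc⟩ := Finset.exists_subsuperset_card_eq (subset_univ (contested f))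
      hf.le (by simpa using hr)
    simp only [mem_biUnion, mem_powersetCard, mem_filter, mem_univ, true_and]
    refine ⟨R, ⟨subset_univ _, hRc⟩, fun i hi j hj hij => ?_⟩
    by_contra hne
    refine mem_compl.1 (mem_coe.1 hj) (hR ?_)
    simp only [contested, mem_filter, mem_univ, true_and]
    exact ⟨i, hne, hij⟩
  refine (Finset.card_le_card hsub).trans ((Finset.card_biUnion_le_card_mul _ _
    ((m + 2) ^ r * (m + 2).factorial) fun R hR => ?_).trans ?_)
  · have h := card_injOn_compl_le R
    rw [Nat.card_eq_fintype_card, Fintype.card_subtype, (mem_powersetCard.1 hR).2] at h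
    exact h
  · rw [card_powersetCard, card_univ, Fintype.card_fin, two_mul, pow_add, mul_assoc]
    exact Nat.mul_le_mul_right _ (Nat.choose_le_pow _ _)

lemma factorial_mul_two_pow_le (n : ℕ) : n.factorial * 2 ^ n ≤ 2 * n ^ n := by
  induction n with
  | zero => simp
  | succ n ih =>
    rcases Nat.eq_zero_or_pos n with rfl | hn
    · simp
    -- Bernoulli's inequality in the form `2 ≤ (1 + 1 / n) ^ n`.
    have hb : 2 * n ^ n ≤ (n + 1) ^ n := by
      have h : (1 : ℝ) + n * (1 / n) ≤ (1 + 1 / n) ^ n :=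
        one_add_mul_le_pow (by have : (0 : ℝ) ≤ 1 / n := by positivity
                               linarith) n
      have hn' : (0 : ℝ) < n := by exact_mod_cast hn
      have h2 : (2 : ℝ) * n ^ n ≤ (n + 1) ^ n := by
        calc (2 : ℝ) * n ^ n = (1 + n * (1 / n)) * n ^ n := by field_simp; norm_num
          _ ≤ (1 + 1 / n) ^ n * n ^ n := by gcongr
          _ = (n + 1) ^ n := by rw [← mul_pow]; congr 1; field_simp
      exact_mod_cast h2
    calc (n + 1).factorial * 2 ^ (n + 1)
        = 2 * (n + 1) * (n.factorial * 2 ^ n) := by rw [Nat.factorial_succ]; ring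
      _ ≤ 2 * (n + 1) * (2 * n ^ n) := Nat.mul_le_mul_left _ ih
      _ ≤ 2 * (n + 1) * (n + 1) ^ n := Nat.mul_le_mul_left _ hb
      _ = 2 * (n + 1) ^ (n + 1) := by ring

/-! ### The fraction of rivalry-free profiles -/

/-- The number of rivalry-free profiles, bounded by splitting according to the first
choices: few distinct ones, few contested agents, or neither. -/
lemma card_rivalryFree_le {m r : ℕ} (hm : 14 ≤ m) (hr : r ≤ m + 2) :
    (Nat.card {t : Fin (m + 2) → Pref (m + 2) // RivalryFree t} : ℝ)
      ≤ ((1 / 2 : ℝ) ^ (m + 2) + 2 * (((m + 2 : ℕ) : ℝ) ^ (2 * r) * (1 / 2 : ℝ) ^ (m + 2))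
          + (4 / 5 : ℝ) ^ r) * ((m + 2).factorial : ℝ) ^ (m + 2) := by
  classical
  set N : ℕ := m + 2 with hN
  set c : ℝ := ((m + 1).factorial : ℝ) ^ N with hc
  have hc0 : 0 ≤ c := by positivity
  have hsplit : (Nat.card {t : Fin N → Pref N // RivalryFree t} : ℝ)
      = ∑ f : Fin N → Fin N,
        (Nat.card {t : Fin N → Pref N // RivalryFree t ∧ (fun i => t i 0) = f} : ℝ) := by
    simp only [Nat.card_eq_fintype_card, Fintype.card_subtype]
    rw [Finset.card_eq_sum_card_fiberwise (f := fun t : Fin N → Pref N => fun i => t i 0)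
      (t := univ) (fun _ _ => by simp)]
    simp only [filter_filter]
    push_cast
    rfl
  have hbound : ∀ f : Fin N → Fin N,
      (Nat.card {t : Fin N → Pref N // RivalryFree t ∧ (fun i => t i 0) = f} : ℝ)
        ≤ (if 4 * (univ.image f).card < N then c else 0)
          + (if (contested f).card < r then c else 0) + c * (4 / 5 : ℝ) ^ r := by
    intro f
    have hp : 0 ≤ c * (4 / 5 : ℝ) ^ r := by positivity
    have hf := card_fiber_le f
    split_ifs with h1 h2 h2
    · linarith
    · linarith
    · linarith
    · have := card_rivalryFree_fiber_le hm f (not_lt.1 h1) (not_lt.1 h2)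
      linarith
  have hfew : ((univ.filter fun f : Fin N → Fin N => (contested f).card < r).card : ℝ)
      ≤ 2 * ((N : ℝ) ^ (2 * r) * (1 / 2 : ℝ) ^ N) * (N : ℝ) ^ N := by
    have h1 : ((univ.filter fun f : Fin N → Fin N => (contested f).card < r).card : ℝ)
        ≤ (N : ℝ) ^ (2 * r) * N.factorial := by exact_mod_cast card_few_contested_le hr
    have h2 : (N.factorial : ℝ) * 2 ^ N ≤ 2 * (N : ℝ) ^ N := by
      exact_mod_cast factorial_mul_two_pow_le N
    have h3 : (N.factorial : ℝ) ≤ 2 * (N : ℝ) ^ N * (1 / 2 : ℝ) ^ N := by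
      calc (N.factorial : ℝ) = N.factorial * 2 ^ N * (1 / 2 : ℝ) ^ N := by
            rw [mul_assoc, ← mul_pow]; norm_num
        _ ≤ _ := by gcongr
    refine h1.trans ((mul_le_mul_of_nonneg_left h3 (by positivity)).trans_eq ?_)
    ring
  have hfac : (N.factorial : ℝ) ^ N = (N : ℝ) ^ N * c := by
    rw [hc, ← mul_pow, hN, Nat.factorial_succ]
    push_cast
    ring
  rw [hsplit]
  refine (Finset.sum_le_sum fun f _ => hbound f).trans ?_
  rw [sum_add_distrib, sum_add_distrib, ← sum_filter, ← sum_filter, sum_const, sum_const,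
    sum_const, card_univ, Fintype.card_fun, Fintype.card_fin, nsmul_eq_mul, nsmul_eq_mul,
    nsmul_eq_mul, hfac]
  have hs := mul_le_mul_of_nonneg_right (card_small_image_le N) hc0
  have hf := mul_le_mul_of_nonneg_right hfew hc0
  rw [Nat.cast_pow]
  linarith

/-- in large unit-capacity house allocation markets (`n` agents, `n`
objects of capacity 1), the fraction of type profiles at which `RSD(t)` weakly rank
dominates `ABM(t)` tends to 0 as `n → ∞`. -/
theorem rsd_rank_dom_abm_vanishes_house_allocation :
    Filter.Tendsto
      (fun n : ℕ =>
        (Nat.card {t : Fin n → Pref n //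
            WeakRankDom t (RSD (fun _ => 1) t) (ABM (fun _ => 1) t)} : ℝ)
          / (Nat.card (Fin n → Pref n) : ℝ))
      Filter.atTop (nhds 0) := by
  rw [← Filter.tendsto_add_atTop_iff_nat 2, Metric.tendsto_atTop]
  intro ε hε
  -- Choose `r` first, so that the `n`-independent term is small, and then `n`.
  obtain ⟨r, hr⟩ := exists_pow_lt_of_lt_one (show (0 : ℝ) < ε / 2 by positivity)
    (show (4 / 5 : ℝ) < 1 by norm_num)
  have hlim : Filter.Tendsto (fun n : ℕ =>
      (1 / 2 : ℝ) ^ n + 2 * ((n : ℝ) ^ (2 * r) * (1 / 2 : ℝ) ^ n)) Filter.atTop (nhds 0) := by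
    have h1 := tendsto_pow_atTop_nhds_zero_of_lt_one (show (0 : ℝ) ≤ 1 / 2 by norm_num)
      (by norm_num)
    have h2 := tendsto_pow_const_mul_const_pow_of_lt_one (2 * r)
      (show (0 : ℝ) ≤ 1 / 2 by norm_num) (by norm_num)
    simpa using h1.add (h2.const_mul 2)
  obtain ⟨n₀, hn₀⟩ := Filter.eventually_atTop.1
    (hlim.eventually_lt_const (show (0 : ℝ) < ε / 2 by positivity))
  refine ⟨n₀ + r + 14, fun m hm => ?_⟩
  have hT : (Nat.card (Fin (m + 2) → Pref (m + 2)) : ℝ)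
      = ((m + 2).factorial : ℝ) ^ (m + 2) := by
    rw [Nat.card_eq_fintype_card, Fintype.card_fun, Fintype.card_perm, Fintype.card_fin]
    push_cast
    rfl
  have hle : (Nat.card {t : Fin (m + 2) → Pref (m + 2) //
        WeakRankDom t (RSD (fun _ => 1) t) (ABM (fun _ => 1) t)} : ℝ)
      ≤ Nat.card {t : Fin (m + 2) → Pref (m + 2) // RivalryFree t} := by
    exact_mod_cast Nat.card_le_card_of_injective
      (Subtype.map id fun t ht => RivalryFree.of_weakRankDom ht)
      (Subtype.map_injective _ Function.injective_id)
  have hmain := card_rivalryFree_le (m := m) (r := r) (by omega) (by omega)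
  have hsmall := hn₀ (m + 2) (by omega)
  rw [Real.dist_eq, sub_zero, abs_of_nonneg (by positivity), hT]
  have hpos : (0 : ℝ) < ((m + 2).factorial : ℝ) ^ (m + 2) := by positivity
  rw [div_lt_iff₀ hpos]
  refine (hle.trans hmain).trans_lt (mul_lt_mul_of_pos_right ?_ hpos)
  linarith
end

section
/- There exist a setting (namely 4 agents and 4 objects, each object of capacity 1) and a type profile t at which NBM(t) strictly rank dominates ABM(t). -/
/-!
With objects `a, b, c, d` (encoded as `0, 1, 2, 3`), let agents `0, 1` rank `a ≻ b ≻ c ≻ d`,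
agent `2` rank `a ≻ c ≻ b ≻ d`, and agent `3` rank `b ≻ a ≻ c ≻ d`.  Only agent `3` applies to `b`
in the first round, and agents `0, 1, 2` compete for `a`.

* If agent `2` wins `a`, the two losers share `c` and `d` under both mechanisms, so the ranks
  obtained are `1, 1, 3, 4`.
* If agent `2` loses, then under the naïve mechanism the other loser wastes the second round on the
  exhausted `b`, so agent `2` gets its second choice `c`, and the ranks are `1, 1, 2, 4`.  Under the
  adaptive mechanism the other loser skips `b` and competes for `c`; when it has priority over
  agent `2` it takes `c` as its third choice and agent `2` ends with `d`: the ranks are `1, 1, 3, 4`.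

Hence the comparison holds for each priority ordering separately, strictly for some of them.  Both
facts are finite checks on natural-number counts (`rankCount_abm_le_nbm`,
`rankCount_abm_lt_nbm`); `sum_rankDist_average` transfers them to the averaged mechanisms.
-/

open Finset

/-- The number of agents who obtain, under the assignment `a`, one of their choices of
(0-indexed) rank at most `K`, at the profile `t`. -/
def rankCount {n m : ℕ} (t : Fin n → Pref m) (a : Fin n → Option (Fin m)) (K : Fin m) : ℕ :=
  ∑ k ∈ Finset.Iic K, ∑ i, if a i = some (t i k) then 1 else 0

/-- The cumulative rank distribution of an average of deterministic assignments is the average of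
their cumulative rank counts. -/
lemma sum_rankDist_average {n m : ℕ} (t : Fin n → Pref m)
    (A : Equiv.Perm (Fin n) → Fin n → Option (Fin m)) (K : Fin m) :
    ∑ k ∈ Finset.Iic K, rankDist t
        (fun i j => (∑ π : Equiv.Perm (Fin n), detAlloc (A π) i j) / (Nat.factorial n)) k
      = ((∑ π : Equiv.Perm (Fin n), rankCount t (A π) K : ℕ) : ℝ) / (Nat.factorial n) := by
  simp only [rankDist, rankCount, detAlloc, ← Finset.sum_div]
  congr 1
  push_cast
  conv_rhs => rw [Finset.sum_comm]
  exact Finset.sum_congr rfl fun k _ => Finset.sum_comm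

/-- The profile `a ≻ b ≻ c ≻ d` (twice), `a ≻ c ≻ b ≻ d`, `b ≻ a ≻ c ≻ d`, with the objects
`a, b, c, d` encoded as `0, 1, 2, 3`. -/
def witnessProfile : Fin 4 → Pref 4 :=
  ![Equiv.refl _, Equiv.refl _, Equiv.swap 1 2, Equiv.swap 0 1]

lemma rankCount_abm_le_nbm : ∀ (π : Equiv.Perm (Fin 4)) (K : Fin 4),
    rankCount witnessProfile (ABMassign (fun _ => 1) witnessProfile π) K
      ≤ rankCount witnessProfile (NBMassign (fun _ => 1) witnessProfile π) K := by
  decide +kernel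

/-- With priorities `3, 0, 1, 2`, agent `1` takes `c` from agent `2` under the adaptive mechanism
only, so one fewer agent gets a first or second choice. -/
lemma rankCount_abm_lt_nbm :
    rankCount witnessProfile (ABMassign (fun _ => 1) witnessProfile (finRotate 4)) 1
      < rankCount witnessProfile (NBMassign (fun _ => 1) witnessProfile (finRotate 4)) 1 := by
  decide +kernel

/-- in the setting with 4 agents and 4 objects of unit capacity there
is a type profile at which `NBM(t)` strictly rank dominates `ABM(t)`. -/
theorem nbm_strictly_rank_dominates_abm_somewhere :
    ∃ t : Fin 4 → Pref 4,
      StrictRankDom t (NBM (fun _ => 1) t) (ABM (fun _ => 1) t) := by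
  refine ⟨witnessProfile, fun K => ?_, 1, ?_⟩
  · unfold NBM ABM
    rw [sum_rankDist_average, sum_rankDist_average]
    gcongr with π
    exact rankCount_abm_le_nbm π K
  · unfold NBM ABM
    rw [sum_rankDist_average, sum_rankDist_average]
    have h := Finset.sum_lt_sum (s := Finset.univ) (fun π _ => rankCount_abm_le_nbm π 1)
      ⟨finRotate 4, Finset.mem_univ _, rankCount_abm_lt_nbm⟩
    gcongr
end
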